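/- For every ε ≥ 0, every r-SCB integer function w, and every natural number J, the following are equivalent: (i) there exists an r-CCB function ŵ of order at most J with w(i) ≤ ŵ(i) ≤ (1+ε)·w(i) for all i ∈ {0,…,r}; (ii) there exists a finite set L of at most J affine functions, each with strictly positive slope and nonnegative intercept, such that the function f(x) = min(w(r), min_{g∈L} g(x)) (interpreted as the constant w(r) when L is empty) satisfies w(i) ≤ f(i) ≤ (1+ε)·w(i) for all i ∈ {0,…,r}. (This shows that the optimal sparse gadget approximation problem is equivalent to the optimal piecewise linear covering problem.) -/

import Mathlib

/-- An `r`-SCB integer function. -/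
def IsSCB (r : ℕ) (w : ℕ → ℝ) : Prop :=
  w 0 = 0 ∧ (∀ i, i < r → w i ≤ w (i + 1)) ∧
    ∀ j, 1 ≤ j → j + 1 ≤ r → w (j - 1) + w (j + 1) ≤ 2 * w j

/-- An `r`-CCB function of order `J` (possibly `J = 0`, the zero function). -/
def IsCCB (r J : ℕ) (what : ℕ → ℝ) : Prop :=
  ∃ a b : Fin J → ℝ,
    (∀ j, 0 < a j) ∧ (∀ j, 0 < b j) ∧ StrictMono b ∧ (∀ j, b j ≤ (r : ℝ)) ∧
    ∀ i : ℕ, i ≤ r → what i = ∑ j, a j * min (i : ℝ) (b j)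

/-!
A gadget `∑ a_j * min x b_j` is the minimum of its affine pieces and its final constant value, which
gives one line per breakpoint. Conversely, the minimum of a constant and increasing lines is built
up by adding the lines in order of increasing slope. A line at least as steep as the function `f`
built so far either lies above `f` on `[0, ∞)` or crosses it from below at some `t > 0`; in the
latter case a single breakpoint at `t` replaces all those of `f` before `t`, so each line costs at
most one breakpoint. The result is a gadget up to the constant `f 0`, which the approximation bounds
squeeze to `0` because `w 0 = 0`.
-/

/-- The function `x ↦ ∑ a_j * min x b_j` of the paper, encoded by the finitely supported function
`a` with `a b_j = a_j`. The `b_j` are then the support of `a`, the order is its cardinality, and the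
slope before the first breakpoint is `a.degree`. -/
noncomputable def gadget (a : ℝ →₀ ℝ) (x : ℝ) : ℝ :=
  a.sum fun b m => m * min x b

section

variable {a : ℝ →₀ ℝ} {c q s t x y : ℝ}

lemma gadget_eq_sum (a : ℝ →₀ ℝ) (x : ℝ) : gadget a x = ∑ b ∈ a.support, a b * min x b :=
  rfl

lemma gadget_add (a a' : ℝ →₀ ℝ) (x : ℝ) : gadget (a + a') x = gadget a x + gadget a' x :=
  Finsupp.sum_add_index' (fun _ => zero_mul _) fun _ _ _ => add_mul _ _ _

lemma gadget_single (t m x : ℝ) : gadget (Finsupp.single t m) x = m * min x t :=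
  Finsupp.sum_single_index (zero_mul _)

lemma gadget_filter_add_filter_not (a : ℝ →₀ ℝ) (p : ℝ → Prop) [DecidablePred p] (x : ℝ) :
    gadget (a.filter p) x + gadget (a.filter fun b => ¬ p b) x = gadget a x := by
  rw [← gadget_add, Finsupp.filter_add_filter_not]

lemma continuous_gadget (a : ℝ →₀ ℝ) : Continuous (gadget a) := by
  simp only [funext (gadget_eq_sum a)]
  fun_prop

lemma gadget_mono (ha : 0 ≤ a) : Monotone (gadget a) := fun _ _ hxy =>
  Finset.sum_le_sum fun b _ => mul_le_mul_of_nonneg_left (min_le_min_right b hxy) (ha b)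

lemma gadget_eq_degree_mul (h : ∀ b ∈ a.support, x ≤ b) : gadget a x = a.degree * x := by
  rw [gadget_eq_sum, Finsupp.degree_apply, Finset.sum_mul]
  exact Finset.sum_congr rfl fun b hb => by rw [min_eq_left (h b hb)]

lemma gadget_le_degree_mul (ha : 0 ≤ a) (x : ℝ) : gadget a x ≤ a.degree * x := by
  rw [Finsupp.degree_apply, Finset.sum_mul]
  exact Finset.sum_le_sum fun b _ => mul_le_mul_of_nonneg_left (min_le_left x b) (ha b)

lemma gadget_zero_right (h : ∀ b ∈ a.support, 0 < b) : gadget a 0 = 0 := by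
  rw [gadget_eq_degree_mul fun b hb => (h b hb).le, mul_zero]

lemma gadget_nonneg (ha : 0 ≤ a) (h : ∀ b ∈ a.support, 0 < b) (hx : 0 ≤ x) : 0 ≤ gadget a x :=
  (gadget_zero_right h).symm.le.trans (gadget_mono ha hx)

lemma gadget_le_of_support_le (ha : 0 ≤ a) (h : ∀ b ∈ a.support, b ≤ y) (x : ℝ) :
    gadget a x ≤ gadget a y :=
  Finset.sum_le_sum fun b hb => mul_le_mul_of_nonneg_left
    ((min_le_right x b).trans (min_eq_right (h b hb)).ge) (ha b)

lemma gadget_eq_of_support_le (hx : ∀ b ∈ a.support, b ≤ x) (hy : ∀ b ∈ a.support, b ≤ y) :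
    gadget a x = gadget a y := by
  rw [gadget_eq_sum, gadget_eq_sum]
  exact Finset.sum_congr rfl fun b hb => by rw [min_eq_right (hx b hb), min_eq_right (hy b hb)]

lemma gadget_lt_gadget_of_mem_support (ha : 0 ≤ a) (ht : t ∈ a.support) (hx : x < t) :
    gadget a x < gadget a t := by
  refine Finset.sum_lt_sum
    (fun d _ => mul_le_mul_of_nonneg_left (min_le_min_right d hx.le) (ha d)) ⟨t, ht, ?_⟩
  beta_reduce
  rw [min_self, min_eq_left hx.le]
  exact mul_lt_mul_of_pos_left hx ((ha t).lt_of_ne' (Finsupp.mem_support_iff.1 ht))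

lemma gadget_sub_le_degree_mul (ha : 0 ≤ a) (hxy : x ≤ y) :
    gadget a y - gadget a x ≤ a.degree * (y - x) := by
  rw [gadget_eq_sum, gadget_eq_sum, Finsupp.degree_apply, Finset.sum_mul, ← Finset.sum_sub_distrib]
  refine Finset.sum_le_sum fun b _ => ?_
  rw [← mul_sub]
  refine mul_le_mul_of_nonneg_left ?_ (ha b)
  rw [sub_le_iff_le_add, ← min_add_add_left, sub_add_cancel]
  exact min_le_min_left y (by linarith)

/-- The minimum of the constant `C` and the affine functions `x ↦ g.1 * x + g.2` for `g ∈ L`; the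
constant is encoded as a line of slope `0`, so that the minimum is never empty. -/
noncomputable def lineEnvelope (C : ℝ) (L : Finset (ℝ × ℝ)) (x : ℝ) : ℝ :=
  (insert ((0 : ℝ), C) L).inf' (Finset.insert_nonempty _ _) fun g => g.1 * x + g.2

lemma le_lineEnvelope_iff {C : ℝ} {L : Finset (ℝ × ℝ)} :
    y ≤ lineEnvelope C L x ↔ y ≤ C ∧ ∀ g ∈ L, y ≤ g.1 * x + g.2 := by
  simp [lineEnvelope]

lemma lineEnvelope_empty (C x : ℝ) : lineEnvelope C ∅ x = C := by
  simp [lineEnvelope]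

lemma lineEnvelope_insert (C : ℝ) (g : ℝ × ℝ) (L : Finset (ℝ × ℝ)) (x : ℝ) :
    lineEnvelope C (insert g L) x = min (g.1 * x + g.2) (lineEnvelope C L x) :=
  eq_of_forall_le_iff fun y => by
    simp only [le_min_iff, le_lineEnvelope_iff, Finset.forall_mem_insert, and_left_comm]

/-- Slope and intercept of the affine piece of `gadget a` that ends at the breakpoint `t`. These are
the lines that cover a gadget, one for each `t ∈ a.support`. -/
noncomputable def pieceEndingAt (a : ℝ →₀ ℝ) (t : ℝ) : ℝ × ℝ :=
  ((a.filter (t ≤ ·)).degree, gadget (a.filter fun b => ¬ t ≤ b) t)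

lemma le_of_mem_support_filter {b : ℝ} (hb : b ∈ (a.filter (t ≤ ·)).support) : t ≤ b :=
  (Finset.mem_filter.1 hb).2

lemma lt_of_mem_support_filter_not {b : ℝ} (hb : b ∈ (a.filter fun b => ¬ t ≤ b).support) :
    b < t :=
  not_le.1 (Finset.mem_filter.1 hb).2

lemma finsupp_filter_nonneg {α M : Type*} [Zero M] [Preorder M] {f : α →₀ M} (hf : 0 ≤ f)
    (p : α → Prop) [DecidablePred p] : 0 ≤ f.filter p := fun i => by
  rw [Finsupp.filter_apply]
  split_ifs
  exacts [hf i, le_rfl]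

lemma gadget_le_pieceEndingAt (ha : 0 ≤ a) (t x : ℝ) :
    gadget a x ≤ (pieceEndingAt a t).1 * x + (pieceEndingAt a t).2 := by
  rw [← gadget_filter_add_filter_not a (t ≤ ·) x]
  exact add_le_add (gadget_le_degree_mul (finsupp_filter_nonneg ha _) x)
    (gadget_le_of_support_le (finsupp_filter_nonneg ha _)
      (fun b hb => (lt_of_mem_support_filter_not hb).le) x)

lemma gadget_eq_pieceEndingAt (hxt : x ≤ t) (hgap : ∀ b ∈ a.support, b < t → b ≤ x) :
    gadget a x = (pieceEndingAt a t).1 * x + (pieceEndingAt a t).2 := by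
  rw [← gadget_filter_add_filter_not a (t ≤ ·) x,
    gadget_eq_degree_mul fun b hb => hxt.trans (le_of_mem_support_filter hb)]
  refine congrArg _ (gadget_eq_of_support_le (fun b hb => ?_) fun b hb =>
    (lt_of_mem_support_filter_not hb).le)
  exact hgap b (Finset.mem_filter.1 hb).1 (lt_of_mem_support_filter_not hb)

lemma pieceEndingAt_fst_pos (ha : 0 ≤ a) (ht : t ∈ a.support) : 0 < (pieceEndingAt a t).1 :=
  Finset.sum_pos
    (fun b hb => (finsupp_filter_nonneg ha _ b).lt_of_ne' (Finsupp.mem_support_iff.1 hb))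
    ⟨t, Finset.mem_filter.2 ⟨ht, le_rfl⟩⟩

lemma pieceEndingAt_snd_nonneg (ha : 0 ≤ a) (hpos : ∀ b ∈ a.support, 0 < b) (ht : 0 ≤ t) :
    0 ≤ (pieceEndingAt a t).2 :=
  gadget_nonneg (finsupp_filter_nonneg ha _) (fun b hb => hpos b (Finset.mem_filter.1 hb).1) ht

lemma gadget_eq_pieceEndingAt_or_support_lt (a : ℝ →₀ ℝ) (x : ℝ) :
    (∃ t ∈ a.support, gadget a x = (pieceEndingAt a t).1 * x + (pieceEndingAt a t).2) ∨
      ∀ b ∈ a.support, b < x := by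
  by_cases! h : ∃ b ∈ a.support, x ≤ b
  · left
    have hne : (a.filter (x ≤ ·)).support.Nonempty :=
      h.imp fun b hb => Finset.mem_filter.2 hb
    obtain ⟨t, ht, hmin⟩ := Finset.exists_min_image _ id hne
    obtain ⟨hta, hxt⟩ := Finset.mem_filter.1 ht
    refine ⟨t, hta, gadget_eq_pieceEndingAt hxt fun b hb hbt => ?_⟩
    by_contra! hxb
    exact hbt.not_ge (hmin b (Finset.mem_filter.2 ⟨hb, hxb.le⟩))
  · exact Or.inr h

theorem lineEnvelope_image_pieceEndingAt {C : ℝ} (ha : 0 ≤ a) (hC : C ≤ gadget a y) (x : ℝ) :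
    lineEnvelope C (a.support.image (pieceEndingAt a)) x = min C (gadget a x) := by
  refine eq_of_forall_le_iff fun z => ?_
  rw [le_lineEnvelope_iff, le_min_iff, Finset.forall_mem_image]
  refine and_congr_right fun hzC => ⟨fun hz => ?_,
    fun hz t _ => hz.trans (gadget_le_pieceEndingAt ha t x)⟩
  obtain ⟨t, ht, hxt⟩ | hlt := gadget_eq_pieceEndingAt_or_support_lt a x
  · exact (hz ht).trans hxt.ge
  · exact hzC.trans (hC.trans (gadget_le_of_support_le ha (fun b hb => (hlt b hb).le) y))

/-- The coefficients of the gadget that has slope `s` up to `t` and the increments of `gadget a`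
after `t`: a single breakpoint at `t` replaces all those before it. -/
noncomputable def steepenBefore (a : ℝ →₀ ℝ) (s t : ℝ) : ℝ →₀ ℝ :=
  a.filter (t ≤ ·) + Finsupp.single t (s - (a.filter (t ≤ ·)).degree)

lemma degree_steepenBefore (a : ℝ →₀ ℝ) (s t : ℝ) : (steepenBefore a s t).degree = s := by
  rw [steepenBefore, map_add, Finsupp.degree_single, add_sub_cancel]

lemma support_steepenBefore_subset (a : ℝ →₀ ℝ) (s t : ℝ) :
    (steepenBefore a s t).support ⊆ insert t (a.filter (t ≤ ·)).support := by
  rw [Finset.insert_eq, Finset.union_comm]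
  exact Finsupp.support_add.trans (Finset.union_subset_union_right Finsupp.support_single_subset)

lemma steepenBefore_nonneg (ha : 0 ≤ a) (hs : a.degree ≤ s) : 0 ≤ steepenBefore a s t := by
  have hdegree : (a.filter (t ≤ ·)).degree ≤ a.degree := by
    conv_rhs => rw [← Finsupp.filter_add_filter_not a (t ≤ ·), map_add]
    exact le_add_of_nonneg_right (Finset.sum_nonneg fun b _ => finsupp_filter_nonneg ha _ b)
  exact add_nonneg (finsupp_filter_nonneg ha _) (Finsupp.single_nonneg.2 (by linarith))

lemma gadget_steepenBefore_of_le (hx : x ≤ t) : gadget (steepenBefore a s t) x = s * x := by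
  rw [gadget_eq_degree_mul, degree_steepenBefore]
  intro b hb
  obtain rfl | hb := Finset.mem_insert.1 (support_steepenBefore_subset a s t hb)
  exacts [hx, hx.trans (le_of_mem_support_filter hb)]

lemma gadget_steepenBefore_of_ge (hx : t ≤ x) :
    gadget (steepenBefore a s t) x = s * t + (gadget a x - gadget a t) := by
  have hbefore : gadget (a.filter fun b => ¬ t ≤ b) x = gadget (a.filter fun b => ¬ t ≤ b) t :=
    gadget_eq_of_support_le (fun b hb => (lt_of_mem_support_filter_not hb).le.trans hx)
      fun b hb => (lt_of_mem_support_filter_not hb).le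
  have hafter : gadget (a.filter (t ≤ ·)) t = (a.filter (t ≤ ·)).degree * t :=
    gadget_eq_degree_mul fun b hb => le_of_mem_support_filter hb
  rw [steepenBefore, gadget_add, gadget_single, min_eq_right hx,
    ← gadget_filter_add_filter_not a (t ≤ ·) x, ← gadget_filter_add_filter_not a (t ≤ ·) t, hbefore,
    hafter]
  ring

lemma exists_line_eq_gadget (ha : 0 ≤ a) (hpos : ∀ b ∈ a.support, 0 < b) (hs : 0 < s)
    (hq : q < c) : ∃ t, 0 < t ∧ s * t + q = c + gadget a t := by
  obtain ⟨N, hN⟩ := a.support.bddAbove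
  have hbound : ∀ x, gadget a x ≤ gadget a N := gadget_le_of_support_le ha fun b hb => hN hb
  have hN0 : 0 ≤ gadget a N := gadget_zero_right hpos ▸ hbound 0
  let T := (c + gadget a N - q) / s
  have hT : 0 ≤ T := div_nonneg (by linarith) hs.le
  have hsT : s * T = c + gadget a N - q := mul_div_cancel₀ _ hs.ne'
  obtain ⟨t, ht, heq⟩ := isPreconnected_Icc.intermediate_value₂
    (Set.left_mem_Icc.2 hT) (Set.right_mem_Icc.2 hT)
    (f := fun x => s * x + q) (g := fun x => c + gadget a x) (by fun_prop)
    ((continuous_gadget a).const_add c).continuousOn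
    (by linarith [gadget_zero_right hpos]) (by linarith [hbound T])
  refine ⟨t, ht.1.lt_of_ne ?_, heq⟩
  rintro rfl
  simp only [mul_zero, zero_add, gadget_zero_right hpos, add_zero] at heq
  exact hq.ne heq

lemma min_line_gadget_of_le (ha : 0 ≤ a) (hs : a.degree ≤ s) (hq : c ≤ q) (hx : 0 ≤ x) :
    min (s * x + q) (c + gadget a x) = c + gadget a x :=
  min_eq_right (by linarith [gadget_le_degree_mul ha x, mul_le_mul_of_nonneg_right hs hx])

lemma min_line_gadget_of_crossing (ha : 0 ≤ a) (hs : a.degree ≤ s)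
    (ht : s * t + q = c + gadget a t) (x : ℝ) :
    min (s * x + q) (c + gadget a x) = q + gadget (steepenBefore a s t) x := by
  obtain hxt | htx := le_total x t
  · rw [gadget_steepenBefore_of_le hxt, add_comm q, min_eq_left]
    linarith [gadget_sub_le_degree_mul ha hxt, mul_le_mul_of_nonneg_right hs (sub_nonneg.2 hxt)]
  · rw [gadget_steepenBefore_of_ge htx, min_eq_right] <;>
      linarith [gadget_sub_le_degree_mul ha htx, mul_le_mul_of_nonneg_right hs (sub_nonneg.2 htx)]

lemma exists_gadget_eq_min_line (ha : 0 ≤ a) (hpos : ∀ b ∈ a.support, 0 < b) (hs : 0 < s)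
    (has : a.degree ≤ s) (c q : ℝ) :
    ∃ a' : ℝ →₀ ℝ, 0 ≤ a' ∧ (∀ b ∈ a'.support, 0 < b) ∧ a'.support.card ≤ a.support.card + 1 ∧
      a'.degree ≤ s ∧ ∀ x, 0 ≤ x → min (s * x + q) (c + gadget a x) = min q c + gadget a' x := by
  obtain hcq | hqc := le_or_gt c q
  · refine ⟨a, ha, hpos, Nat.le_succ _, has, fun x hx => ?_⟩
    rw [min_eq_right hcq, min_line_gadget_of_le ha has hcq hx]
  · obtain ⟨t, ht, hcross⟩ := exists_line_eq_gadget ha hpos hs hqc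
    have hsub := support_steepenBefore_subset a s t
    refine ⟨steepenBefore a s t, steepenBefore_nonneg ha has, fun b hb => ?_,
      (Finset.card_le_card hsub).trans ((Finset.card_insert_le _ _).trans
        (Nat.succ_le_succ (Finset.card_filter_le _ _))),
      (degree_steepenBefore a s t).le, fun x _ => ?_⟩
    · obtain rfl | hb := Finset.mem_insert.1 (hsub hb)
      exacts [ht, hpos b (Finset.mem_filter.1 hb).1]
    · rw [min_eq_left hqc.le, min_line_gadget_of_crossing ha has hcross]

end

theorem exists_gadget_eq_lineEnvelope (C : ℝ) (L : Finset (ℝ × ℝ)) (hL : ∀ g ∈ L, 0 < g.1) :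
    ∃ a : ℝ →₀ ℝ, 0 ≤ a ∧ (∀ b ∈ a.support, 0 < b) ∧ a.support.card ≤ L.card ∧
      (∀ s, 0 ≤ s → (∀ g ∈ L, g.1 ≤ s) → a.degree ≤ s) ∧
      ∀ x, 0 ≤ x → lineEnvelope C L x = lineEnvelope C L 0 + gadget a x := by
  classical
  induction L using Finset.induction_on_max_value (Prod.fst : ℝ × ℝ → ℝ) with
  | empty => exact ⟨0, by simp [lineEnvelope_empty, gadget]⟩
  | insert g L hgL hmax ih =>
    obtain ⟨hg, hL⟩ := Finset.forall_mem_insert .. |>.1 hL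
    obtain ⟨a, ha, hpos, hcard, hslope, heq⟩ := ih hL
    obtain ⟨a', ha', hpos', hcard', hslope', heq'⟩ :=
      exists_gadget_eq_min_line ha hpos hg (hslope g.1 hg.le hmax) (lineEnvelope C L 0) g.2
    refine ⟨a', ha', hpos', ?_, fun s _ hs => ?_, fun x hx => ?_⟩
    · rw [Finset.card_insert_of_notMem hgL]
      exact hcard'.trans (Nat.succ_le_succ hcard)
    · exact hslope'.trans (hs g (Finset.mem_insert_self g L))
    · rw [lineEnvelope_insert, lineEnvelope_insert, heq x hx, heq' x hx, mul_zero, zero_add]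

lemma gadget_embDomain {ι : Type*} [Fintype ι] (e : ι ↪ ℝ) (m : ι →₀ ℝ) (x : ℝ) :
    gadget (m.embDomain e) x = ∑ j, m j * min x (e j) := by
  rw [gadget, Finsupp.sum_embDomain, Finsupp.sum_fintype _ _ fun _ => zero_mul _]

theorem isCCB_iff_exists_gadget {r J : ℕ} {what : ℕ → ℝ} :
    IsCCB r J what ↔ ∃ a : ℝ →₀ ℝ, 0 ≤ a ∧ (∀ b ∈ a.support, 0 < b) ∧
      (∀ b ∈ a.support, b ≤ r) ∧ a.support.card = J ∧ ∀ i ≤ r, what i = gadget a i := by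
  constructor
  · rintro ⟨m, b, hm, hb, hmono, hbr, heq⟩
    let e : Fin J ↪ ℝ := ⟨b, hmono.injective⟩
    let m' : Fin J →₀ ℝ := Finsupp.equivFunOnFinite.symm m
    have hnonneg : 0 ≤ m'.embDomain e := by
      have hm' : 0 ≤ m' := fun j => (hm j).le
      simpa only [Finsupp.embDomain_zero] using Finsupp.embDomain_mono e hm'
    have hsupp : (m'.embDomain e).support = Finset.univ.map e := by
      rw [Finsupp.support_embDomain, Finset.map_inj]
      exact Finset.eq_univ_of_forall fun j => Finsupp.mem_support_iff.2 (hm j).ne'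
    refine ⟨m'.embDomain e, hnonneg, ?_, ?_, ?_, fun i hi => ?_⟩
    · rw [hsupp, Finset.forall_mem_map]
      exact fun j _ => hb j
    · rw [hsupp, Finset.forall_mem_map]
      exact fun j _ => hbr j
    · rw [hsupp, Finset.card_map, Finset.card_fin]
    · exact (heq i hi).trans (gadget_embDomain e m' i).symm
  · rintro ⟨a, ha, hpos, har, rfl, heq⟩
    let e := a.support.orderEmbOfFin rfl
    have he : ∀ j, e j ∈ a.support := a.support.orderEmbOfFin_mem rfl
    refine ⟨fun j => a (e j), e, fun j => (ha _).lt_of_ne' (Finsupp.mem_support_iff.1 (he j)),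
      fun j => hpos _ (he j), e.strictMono, fun j => har _ (he j), fun i hi => ?_⟩
    calc what i = ∑ b ∈ a.support, a b * min (i : ℝ) b := heq i hi
      _ = ∑ b ∈ Finset.univ.map e.toEmbedding, a b * min (i : ℝ) b := by
        rw [Finset.map_orderEmbOfFin_univ]
      _ = ∑ j, a (e j) * min (i : ℝ) (e j) := Finset.sum_map _ _ _

theorem gadget_approx_iff_linear_cover_general {r : ℕ} {w u : ℕ → ℝ} (hw : w 0 = 0)
    (hu : u 0 = 0) (hwr : ∀ i ≤ r, w i ≤ w r) (J : ℕ) :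
    (∃ (J' : ℕ) (what : ℕ → ℝ), J' ≤ J ∧ IsCCB r J' what ∧
        ∀ i ≤ r, w i ≤ what i ∧ what i ≤ u i)
    ↔
    (∃ L : Finset (ℝ × ℝ), L.card ≤ J ∧ (∀ g ∈ L, 0 < g.1 ∧ 0 ≤ g.2) ∧
        ∀ i ≤ r, w i ≤ lineEnvelope (w r) L i ∧ lineEnvelope (w r) L i ≤ u i) := by
  constructor
  · rintro ⟨J', what, hJ, hccb, happ⟩
    obtain ⟨a, ha, hpos, -, rfl, heq⟩ := isCCB_iff_exists_gadget.1 hccb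
    refine ⟨a.support.image (pieceEndingAt a), Finset.card_image_le.trans hJ,
      Finset.forall_mem_image.2 fun t ht => ⟨pieceEndingAt_fst_pos ha ht,
        pieceEndingAt_snd_nonneg ha hpos (hpos t ht).le⟩, fun i hi => ?_⟩
    rw [lineEnvelope_image_pieceEndingAt ha (heq r le_rfl ▸ (happ r le_rfl).1), ← heq i hi]
    exact ⟨le_min (hwr i hi) (happ i hi).1, min_le_of_right_le (happ i hi).2⟩
  · rintro ⟨L, hLJ, hL, happ⟩
    obtain ⟨a, ha, hpos, hcard, -, heq⟩ :=
      exists_gadget_eq_lineEnvelope (w r) L fun g hg => (hL g hg).1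
    have hzero : lineEnvelope (w r) L 0 = 0 := by
      have := happ 0 r.zero_le
      rw [hw, hu, Nat.cast_zero] at this
      exact le_antisymm this.2 this.1
    simp only [hzero, zero_add] at heq
    have hccb : IsCCB r a.support.card fun i => gadget a i := by
      refine isCCB_iff_exists_gadget.2 ⟨a, ha, hpos, fun b hb => ?_, rfl, fun _ _ => rfl⟩
      by_contra! hrb
      have hbC : gadget a b ≤ w r := heq b (hpos b hb).le ▸ (le_lineEnvelope_iff.1 le_rfl).1
      have hr : w r ≤ gadget a r := heq r r.cast_nonneg ▸ (happ r le_rfl).1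
      exact (gadget_lt_gadget_of_mem_support ha hb hrb).not_ge (hbC.trans hr)
    exact ⟨_, _, hcard.trans hLJ, hccb, fun i hi => heq i i.cast_nonneg ▸ happ i hi⟩

lemma IsSCB.monotoneOn {r : ℕ} {w : ℕ → ℝ} (hw : IsSCB r w) : MonotoneOn w (Set.Iic r) :=
  monotoneOn_of_le_add_one Set.ordConnected_Iic fun i _ _ hi => hw.2.1 i hi

/-- **Equivalence of sparse gadget approximation and piecewise linear covering.**
For every `ε ≥ 0`, every `r`-SCB integer function `w`, and every `J : ℕ`, there exists an
`r`-CCB function of order at most `J` with `w ≤ ŵ ≤ (1+ε)·w` on `{0,…,r}` if and only if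
there exists a set `L` of at most `J` affine functions with strictly positive slopes and
nonnegative intercepts such that `f(x) = min(w(r), min_{g ∈ L} g(x))` satisfies
`w(i) ≤ f(i) ≤ (1+ε)·w(i)` for all `i ∈ {0,…,r}`. -/
theorem gadget_approx_iff_linear_cover
    (ε : ℝ) (hε : 0 ≤ ε) (r : ℕ) (hr : 1 ≤ r) (w : ℕ → ℝ) (hw : IsSCB r w) (J : ℕ) :
    (∃ (J' : ℕ) (what : ℕ → ℝ), J' ≤ J ∧ IsCCB r J' what ∧
        ∀ i ≤ r, w i ≤ what i ∧ what i ≤ (1 + ε) * w i)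
    ↔
    (∃ L : Finset (ℝ × ℝ), L.card ≤ J ∧ (∀ g ∈ L, 0 < g.1 ∧ 0 ≤ g.2) ∧
        ∀ i ≤ r,
          w i ≤ (insert ((0 : ℝ), w r) L).inf' (Finset.insert_nonempty _ _)
              (fun g => g.1 * (i : ℝ) + g.2) ∧
          (insert ((0 : ℝ), w r) L).inf' (Finset.insert_nonempty _ _)
              (fun g => g.1 * (i : ℝ) + g.2) ≤ (1 + ε) * w i) := by
  exact gadget_approx_iff_linear_cover_general hw.1 (by rw [hw.1, mul_zero])
    (fun i hi => hw.monotoneOn hi Set.self_mem_Iic hi) J
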